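/- Let G be a connected graph with at least one edge. If G is movable, then G has a NAC-coloring. -/

import Mathlib

open SimpleGraph Real

/-- The Euclidean plane. -/
abbrev Plane : Type := EuclideanSpace ℝ (Fin 2)

variable {V : Type*}

/-- A placement of a graph in the plane: endpoints of edges do not coincide. -/
def IsPlacement (G : SimpleGraph V) (p : V → Plane) : Prop :=
  ∀ ⦃u v : V⦄, G.Adj u v → p u ≠ p v

/-- Two placements are equivalent as frameworks on `G` if corresponding
edge lengths agree. -/
def FrameworkEquiv (G : SimpleGraph V) (p q : V → Plane) : Prop :=
  ∀ ⦃u v : V⦄, G.Adj u v → dist (p u) (p v) = dist (q u) (q v)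

/-- Two placements are congruent if all pairwise distances agree. -/
def PCongruent (p q : V → Plane) : Prop :=
  ∀ u v : V, dist (p u) (p v) = dist (q u) (q v)

/-- A flex of the framework `(G, p)`: a continuous path of placements on `[0,1]`
starting at `p`, each equivalent to `(G, p)`. -/
def IsFlex (G : SimpleGraph V) (p : V → Plane) (f : ℝ → V → Plane) : Prop :=
  ContinuousOn f (Set.Icc 0 1) ∧ f 0 = p ∧
    ∀ t ∈ Set.Icc (0 : ℝ) 1, IsPlacement G (f t) ∧ FrameworkEquiv G p (f t)

/-- A flex is trivial if every placement along it is congruent to the initial one. -/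
def IsTrivialFlex (p : V → Plane) (f : ℝ → V → Plane) : Prop :=
  ∀ t ∈ Set.Icc (0 : ℝ) 1, PCongruent (f t) p

/-- The placement `p` induces the labeling `lam`. -/
def Induces (G : SimpleGraph V) (p : V → Plane) (lam : Sym2 V → ℝ) : Prop :=
  ∀ ⦃u v : V⦄, G.Adj u v → dist (p u) (p v) = lam s(u, v)

/-- A labeling (positive on the edges) is flexible if some framework inducing it
has a non-trivial flex. -/
def IsFlexibleLabeling (G : SimpleGraph V) (lam : Sym2 V → ℝ) : Prop :=
  (∀ e ∈ G.edgeSet, 0 < lam e) ∧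
    ∃ p : V → Plane, Induces G p lam ∧ ∃ f, IsFlex G p f ∧ ¬ IsTrivialFlex p f

/-- A labeling is a proper flexible labeling if some framework inducing it has a
non-trivial flex in which all but finitely many placements are injective. -/
def IsProperFlexibleLabeling (G : SimpleGraph V) (lam : Sym2 V → ℝ) : Prop :=
  (∀ e ∈ G.edgeSet, 0 < lam e) ∧
    ∃ p : V → Plane, Induces G p lam ∧ ∃ f, IsFlex G p f ∧ ¬ IsTrivialFlex p f ∧
      {t ∈ Set.Icc (0 : ℝ) 1 | ¬ Function.Injective (f t)}.Finite

/-- A graph is movable if it has a proper flexible labeling. -/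
def Movable (G : SimpleGraph V) : Prop :=
  ∃ lam : Sym2 V → ℝ, IsProperFlexibleLabeling G lam

/-- A NAC-coloring: a surjective 2-coloring (`true` = red, `false` = blue) of the
edges such that every cycle is either monochromatic or contains at least two
edges of each color. -/
def IsNACColoring (G : SimpleGraph V) (δ : Sym2 V → Bool) : Prop :=
  (∃ e ∈ G.edgeSet, δ e = true) ∧ (∃ e ∈ G.edgeSet, δ e = false) ∧
    ∀ ⦃v : V⦄ (c : G.Walk v v), c.IsCycle →
      (∀ e ∈ c.edges, δ e = true) ∨ (∀ e ∈ c.edges, δ e = false) ∨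
        (2 ≤ (c.edges.filter (fun e => δ e)).length ∧
          2 ≤ (c.edges.filter (fun e => !(δ e))).length)

/-!
Use complex coordinates, rotated and scaled so that the displacement along one edge is constant.
Along a nontrivial flex the displacement `w` of some other edge then takes infinitely many values,
so it is transcendental over `ℂ` in a suitable ultrapower of `ℂ`, and a valuation `ν` trivial on
`ℂ` satisfies `ν w < 1`. On every edge, `w` and its complex conjugate `z` have a nonzero constant
product, the squared length, hence `ν w * ν z = 1`. Colour an edge blue if `ν w < 1` and red if
`ν z ≤ 1`; the edge with constant displacement is red. The displacements along a cycle sum to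
zero, so a single red edge is impossible because the other `w` would lie in the maximal ideal of
`ν`, and a single blue edge because the other `z` would lie in its valuation ring.
-/

section Coloring

variable {G : SimpleGraph V}

lemma apply_eq_of_forall_mem_edges {X : Type*} {f : V → X} {u v : V} (p : G.Walk u v)
    (h : ∀ x y, s(x, y) ∈ p.edges → f x = f y) : f u = f v := by
  induction p with
  | nil => rfl
  | cons hadj p ih =>
    simp only [Walk.edges_cons, List.mem_cons] at h
    exact (h _ _ (.inl rfl)).trans (ih fun x y hxy => h x y (.inr hxy))

lemma apply_ne_of_length_filter_edges_eq_one {X : Type*} {f : V → X} {P : Sym2 V → Bool}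
    (hP : ∀ ⦃x y⦄, G.Adj x y → (P s(x, y) ↔ f x ≠ f y)) {u v : V} (p : G.Walk u v)
    (hone : (p.edges.filter P).length = 1) : f u ≠ f v := by
  induction p with
  | nil => simp at hone
  | @cons u v w hadj p ih =>
    rw [Walk.edges_cons] at hone
    by_cases hc : P s(u, v)
    · rw [List.filter_cons_of_pos hc, List.length_cons, Nat.add_eq_right,
        List.length_eq_zero_iff, List.filter_eq_nil_iff] at hone
      have htail : f v = f w := apply_eq_of_forall_mem_edges p fun x y hxy =>
        not_not.1 fun hne => hone _ hxy ((hP (p.adj_of_mem_edges hxy)).2 hne)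
      exact htail ▸ (hP hadj).1 hc
    · rw [List.filter_cons_of_neg hc] at hone
      have hhead : f u = f v := not_not.1 fun hne => hc ((hP hadj).2 hne)
      exact hhead ▸ ih hone

lemma isNACColoring_of_apply_ne {X Y : Type*} {f : V → X} {g : V → Y} {δ : Sym2 V → Bool}
    (hf : ∀ ⦃x y⦄, G.Adj x y → (δ s(x, y) = true ↔ f x ≠ f y))
    (hg : ∀ ⦃x y⦄, G.Adj x y → (δ s(x, y) = false ↔ g x ≠ g y))
    (hred : ∃ x y, G.Adj x y ∧ f x ≠ f y) (hblue : ∃ x y, G.Adj x y ∧ g x ≠ g y) :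
    IsNACColoring G δ := by
  obtain ⟨a, b, hab, hfab⟩ := hred
  obtain ⟨c, d, hcd, hgcd⟩ := hblue
  refine ⟨⟨s(a, b), hab, (hf hab).2 hfab⟩, ⟨s(c, d), hcd, (hg hcd).2 hgcd⟩, fun v p _ => ?_⟩
  have hred_ne : (p.edges.filter fun e => δ e).length ≠ 1 := fun h =>
    apply_ne_of_length_filter_edges_eq_one hf p h rfl
  have hblue_ne : (p.edges.filter fun e => !δ e).length ≠ 1 := fun h =>
    apply_ne_of_length_filter_edges_eq_one (by simpa using hg) p h rfl
  by_cases hblue_nil : p.edges.filter (fun e => !δ e) = []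
  · exact .inl (by simpa using hblue_nil)
  by_cases hred_nil : p.edges.filter (fun e => δ e) = []
  · exact .inr (.inl (by simpa using hred_nil))
  rw [← List.length_eq_zero_iff] at hblue_nil hred_nil
  exact .inr (.inr ⟨by omega, by omega⟩)

lemma exists_isNACColoring_of_eq_iff_ne {X Y : Type*} {f : V → X} {g : V → Y}
    (hfg : ∀ ⦃x y⦄, G.Adj x y → (g x = g y ↔ f x ≠ f y))
    (hf : ∃ x y, G.Adj x y ∧ f x = f y) (hg : ∃ x y, G.Adj x y ∧ g x = g y) :
    ∃ δ : Sym2 V → Bool, IsNACColoring G δ := by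
  classical
  obtain ⟨a, b, hab, hfab⟩ := hf
  obtain ⟨c, d, hcd, hgcd⟩ := hg
  refine ⟨fun e => decide (e.map g).IsDiag, isNACColoring_of_apply_ne (f := f) (g := g)
    (fun x y hxy => ?_) (fun x y _ => ?_) ⟨c, d, hcd, (hfg hcd).1 hgcd⟩
    ⟨a, b, hab, fun hgab => (hfg hab).1 hgab hfab⟩⟩
  · simpa using hfg hxy
  · simp

lemma exists_isNACColoring_of_valuation {R Γ₀ : Type*} [Ring R]
    [LinearOrderedCommGroupWithZero Γ₀] (v : Valuation R Γ₀) {w z : V → R}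
    (hedge : ∀ ⦃x y⦄, G.Adj x y → v (w x - w y) * v (z x - z y) = 1)
    (hlt : ∃ x y, G.Adj x y ∧ v (w x - w y) < 1) (heq : ∃ x y, G.Adj x y ∧ v (w x - w y) = 1) :
    ∃ δ : Sym2 V → Bool, IsNACColoring G δ := by
  -- Each edge is collapsed either by `w` modulo the maximal ideal or by `z` modulo the
  -- valuation ring, never by both.
  let f : V → R ⧸ v.ltAddSubgroup 1 := fun x => w x
  let g : V → R ⧸ v.integer.toAddSubgroup := fun x => z x
  have hf : ∀ x y, f x = f y ↔ v (w x - w y) < 1 := fun x y => by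
    rw [QuotientAddGroup.eq_iff_sub_mem, Valuation.mem_ltAddSubgroup_iff, Units.val_one]
  have hg : ∀ x y, g x = g y ↔ v (z x - z y) ≤ 1 := fun x y =>
    QuotientAddGroup.eq_iff_sub_mem
  obtain ⟨a, b, hab, hlt⟩ := hlt
  obtain ⟨c, d, hcd, heq⟩ := heq
  refine exists_isNACColoring_of_eq_iff_ne (f := f) (g := g) (fun x y hxy => ?_)
    ⟨a, b, hab, (hf a b).2 hlt⟩ ⟨c, d, hcd, (hg c d).2 ?_⟩
  · have hw : 0 < v (w x - w y) := zero_lt_iff.2 (left_ne_zero_of_mul_eq_one (hedge hxy))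
    rw [hg, ne_eq, hf, not_lt, eq_inv_of_mul_eq_one_right (hedge hxy), inv_le_one₀ hw]
  · simpa [heq] using (hedge hcd).le

end Coloring

section Valuation

lemma isTrivialOn_of_algebraMap_le_one {k R Γ₀ : Type*} [Field k] [Ring R] [Algebra k R]
    [LinearOrderedCommMonoidWithZero Γ₀] {ν : Valuation R Γ₀}
    (hν : ∀ c : k, ν (algebraMap k R c) ≤ 1) : ν.IsTrivialOn k where
  eq_one c hc := by
    have hmul : ν (algebraMap k R c) * ν (algebraMap k R c⁻¹) = 1 := by
      rw [← map_mul, ← map_mul, mul_inv_cancel₀ hc, map_one, map_one]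
    exact (hν c).antisymm (hmul.ge.trans (mul_le_of_le_one_right' (hν c⁻¹)))

lemma exists_valuationSubring_of_transcendental {k K : Type*} [Field k] [Field K] [Algebra k K]
    {x : K} (hx : Transcendental k x) :
    ∃ A : ValuationSubring K, A.valuation.IsTrivialOn k ∧ A.valuation x < 1 := by
  have hinv : x⁻¹ ∉ (integralClosure k K).toSubring := fun h =>
    hx (IsAlgebraic.inv_iff.1 (isAlgebraic_iff_isIntegral.2 h))
  obtain ⟨A, hA, hxA⟩ := Subring.exists_le_valuationSubring_of_isIntegrallyClosedIn hinv
  have hconst (c : k) : algebraMap k K c ∈ A := hA ((integralClosure k K).algebraMap_mem c)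
  refine ⟨A, isTrivialOn_of_algebraMap_le_one fun c => (A.valuation_le_one_iff _).2 (hconst c), ?_⟩
  have hx0 : x ≠ 0 := fun h => hx (h ▸ isAlgebraic_zero)
  rwa [← A.valuation_le_one_iff, not_le, map_inv₀,
    one_lt_inv₀ ((Valuation.pos_iff _).2 hx0)] at hxA

open Filter

/-- The pointwise algebra structure on germs along a filter; scalars act as constant germs. It
makes an ultrapower of a field an extension of that field. -/
instance germAlgebra {I R S : Type*} (l : Filter I) [CommSemiring R] [Semiring S] [Algebra R S] :
    Algebra R (Germ l S) where
  algebraMap := (Germ.coeRingHom l).comp (algebraMap R (I → S))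
  commutes' r x := x.inductionOn fun f => congrArg Germ.ofFun (Algebra.commutes r f)
  smul_def' r x := x.inductionOn fun f => congrArg Germ.ofFun (Algebra.smul_def r f)

lemma aeval_germ {I R S : Type*} [CommSemiring R] [Semiring S] [Algebra R S] (l : Filter I)
    (h : I → S) (p : Polynomial R) :
    Polynomial.aeval (h : Germ l S) p = ((Polynomial.aeval h p : I → S) : Germ l S) :=
  (Polynomial.hom_eval₂ p (algebraMap R (I → S)) (Germ.coeRingHom l) h).symm

lemma transcendental_germ_of_tendsto_cofinite {I k : Type*} [CommRing k] [IsDomain k]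
    {l : Filter I} [l.NeBot] {h : I → k} (hl : Tendsto h l cofinite) :
    Transcendental k (h : Germ l k) := by
  rintro ⟨p, hp, hzero⟩
  rw [aeval_germ] at hzero
  have hroots : ∀ᶠ t in l, p.IsRoot (h t) := by
    filter_upwards [Germ.coe_eq.1 hzero] with t ht
    simpa using ht
  have hnonroots : ∀ᶠ t in l, ¬ p.IsRoot (h t) :=
    hl.eventually (Polynomial.finite_setOfPred_isRoot hp).compl_mem_cofinite
  obtain ⟨t, hroot, hnonroot⟩ := (hroots.and hnonroots).exists
  exact hnonroot hroot

lemma exists_valuation_pi_lt_one.{u, v} {I : Type u} {k : Type v} [Field k] {h : I → k}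
    (hinf : (Set.range h).Infinite) :
    ∃ (Γ₀ : Type (max u v)) (_ : LinearOrderedCommGroupWithZero Γ₀) (ν : Valuation (I → k) Γ₀),
      ν.IsTrivialOn k ∧ ν h < 1 := by
  have : (comap h cofinite).NeBot :=
    comap_neBot_iff_frequently.2 (frequently_cofinite_iff_infinite.2 hinf)
  let U := Ultrafilter.of (comap h cofinite)
  have hU : Tendsto h U cofinite := tendsto_comap.mono_left (Ultrafilter.of_le _)
  obtain ⟨A, hA, hlt⟩ :=
    exists_valuationSubring_of_transcendental (transcendental_germ_of_tendsto_cofinite hU)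
  exact ⟨A.ValueGroup, inferInstance, A.valuation.comap (Germ.coeRingHom (U : Filter I)),
    ⟨fun c hc => hA.eq_one c hc⟩, hlt⟩

end Valuation

section Motion

variable {G : SimpleGraph V}

lemma exists_isNACColoring_of_infinite_range {I k : Type*} [Field k] {w z : V → I → k}
    (hlen : ∀ ⦃x y⦄, G.Adj x y →
      ∃ c : k, c ≠ 0 ∧ (w x - w y) * (z x - z y) = algebraMap k (I → k) c)
    (hfixed : ∃ x y, G.Adj x y ∧ w x - w y = 1)
    (hmoving : ∃ x y, G.Adj x y ∧ (Set.range (w x - w y)).Infinite) :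
    ∃ δ : Sym2 V → Bool, IsNACColoring G δ := by
  obtain ⟨a, b, hab, hinf⟩ := hmoving
  obtain ⟨Γ₀, _, ν, hν, hlt⟩ := exists_valuation_pi_lt_one hinf
  obtain ⟨x, y, hxy, hone⟩ := hfixed
  refine exists_isNACColoring_of_valuation ν (w := w) (z := z) (fun u v huv => ?_)
    ⟨a, b, hab, hlt⟩ ⟨x, y, hxy, by rw [hone, map_one]⟩
  obtain ⟨c, hc, hprod⟩ := hlen huv
  rw [← map_mul, hprod, hν.eq_one c hc]

lemma exists_isNACColoring_of_norm_sub_eq {I : Type*} {w : V → I → ℂ}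
    (hlen : ∀ ⦃x y⦄, G.Adj x y → ∃ r : ℝ, r ≠ 0 ∧ ∀ t, ‖w x t - w y t‖ = r)
    (hfixed : ∃ x y, G.Adj x y ∧ w x - w y = 1)
    (hmoving : ∃ x y, G.Adj x y ∧ (Set.range (w x - w y)).Infinite) :
    ∃ δ : Sym2 V → Bool, IsNACColoring G δ := by
  refine exists_isNACColoring_of_infinite_range (z := fun x => star (w x)) (fun x y hxy => ?_)
    hfixed hmoving
  obtain ⟨r, hr, hnorm⟩ := hlen hxy
  refine ⟨(r : ℂ) ^ 2, pow_ne_zero 2 (Complex.ofReal_ne_zero.2 hr), ?_⟩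
  rw [← star_sub]
  ext t
  calc (w x t - w y t) * star (w x t - w y t) = (‖w x t - w y t‖ : ℂ) ^ 2 := Complex.mul_conj' _
    _ = (r : ℂ) ^ 2 := by rw [hnorm t]

end Motion

section Flex

/-- The identification of the plane with `ℂ`, in which rotations and scalings become
multiplications. -/
noncomputable def Plane.toComplex : Plane ≃ₗᵢ[ℝ] ℂ := Complex.orthonormalBasisOneI.repr.symm

/-- The placement `p` in complex coordinates, rotated and scaled so that the displacement from
`b` to `a` becomes `1` (junk value `0` if `p a = p b`). -/
noncomputable def normalizedPlacement (a b : V) (p : V → Plane) (v : V) : ℂ :=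
  (p v).toComplex / ((p a).toComplex - (p b).toComplex)

variable {G : SimpleGraph V} {a b : V} {p q : V → Plane}

lemma normalizedPlacement_sub_eq_one (hab : p a ≠ p b) :
    normalizedPlacement a b p a - normalizedPlacement a b p b = 1 := by
  rw [normalizedPlacement, normalizedPlacement, ← sub_div, div_self]
  exact sub_ne_zero.2 (Plane.toComplex.injective.ne hab)

lemma norm_normalizedPlacement_sub (a b : V) (p : V → Plane) (u v : V) :
    ‖normalizedPlacement a b p u - normalizedPlacement a b p v‖ =
      dist (p u) (p v) / dist (p a) (p b) := by
  rw [normalizedPlacement, normalizedPlacement, ← sub_div, norm_div, ← dist_eq_norm,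
    ← dist_eq_norm, LinearIsometryEquiv.dist_map, LinearIsometryEquiv.dist_map]

lemma continuousOn_normalizedPlacement {T : Type*} [TopologicalSpace T] {f : T → V → Plane}
    {s : Set T} (hf : ContinuousOn f s) (hab : ∀ t ∈ s, f t a ≠ f t b) (v : V) :
    ContinuousOn (fun t => normalizedPlacement a b (f t) v) s := by
  have hcoord (u : V) : ContinuousOn (fun t => (f t u).toComplex) s :=
    Plane.toComplex.continuous.comp_continuousOn ((continuous_apply u).comp_continuousOn hf)
  exact (hcoord v).div ((hcoord a).sub (hcoord b)) fun t ht =>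
    sub_ne_zero.2 (Plane.toComplex.injective.ne (hab t ht))

lemma pCongruent_of_normalizedPlacement_sub_eq (hG : G.Preconnected) (hp : p a ≠ p b)
    (hpq : dist (p a) (p b) = dist (q a) (q b))
    (hedge : ∀ ⦃u v⦄, G.Adj u v → normalizedPlacement a b p u - normalizedPlacement a b p v =
      normalizedPlacement a b q u - normalizedPlacement a b q v) : PCongruent p q := by
  intro u v
  obtain ⟨c⟩ := hG u v
  have htranslate : normalizedPlacement a b p u - normalizedPlacement a b q u =
      normalizedPlacement a b p v - normalizedPlacement a b q v :=
    apply_eq_of_forall_mem_edges (f := normalizedPlacement a b p - normalizedPlacement a b q) c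
      fun x y hxy => sub_eq_sub_iff_sub_eq_sub.1 (hedge (c.adj_of_mem_edges hxy))
  have hnorm := congrArg norm (sub_eq_sub_iff_sub_eq_sub.1 htranslate)
  rwa [norm_normalizedPlacement_sub, norm_normalizedPlacement_sub, ← hpq,
    div_left_inj' (dist_ne_zero.2 hp)] at hnorm

lemma exists_adj_infinite_image_normalizedPlacement_sub {f : ℝ → V → Plane}
    (hG : G.Preconnected) (hab : G.Adj a b) (hf : IsFlex G p f) (hnt : ¬ IsTrivialFlex p f) :
    ∃ u v, G.Adj u v ∧ ((fun t => normalizedPlacement a b (f t) u -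
      normalizedPlacement a b (f t) v) '' Set.Icc 0 1).Infinite := by
  obtain ⟨hcont, rfl, hequiv⟩ := hf
  by_contra! hfin
  refine hnt fun t ht => pCongruent_of_normalizedPlacement_sub_eq hG ((hequiv t ht).1 hab)
    ((hequiv t ht).2 hab).symm fun u v huv => ?_
  have hcoord := continuousOn_normalizedPlacement hcont fun s hs => (hequiv s hs).1 hab
  have hconst : ((fun s => normalizedPlacement a b (f s) u -
      normalizedPlacement a b (f s) v) '' Set.Icc 0 1).Subsingleton := by
    by_contra hns
    exact (isPreconnected_Icc.image _ ((hcoord u).sub (hcoord v))).infinite_of_nontrivial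
      (Set.not_subsingleton_iff.1 hns) (hfin u v huv)
  exact hconst (Set.mem_image_of_mem _ ht)
    (Set.mem_image_of_mem _ (Set.left_mem_Icc.2 zero_le_one))

lemma nontrivial_of_not_isTrivialFlex {f : ℝ → V → Plane} (hnt : ¬ IsTrivialFlex p f) :
    Nontrivial V := by
  by_contra! hV
  exact hnt fun t _ u v => by simp [Subsingleton.elim u v]

theorem NAC_coloring_of_movable_general (hG : G.Preconnected)
    (hflex : ∃ lam, IsFlexibleLabeling G lam) : ∃ δ : Sym2 V → Bool, IsNACColoring G δ := by
  obtain ⟨lam, hpos, p, hp, f, hf, hnt⟩ := hflex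
  have := nontrivial_of_not_isTrivialFlex hnt
  obtain ⟨a, -⟩ := exists_pair_ne V
  obtain ⟨b, hab⟩ := hG.exists_adj_of_nontrivial a
  have hmoving := exists_adj_infinite_image_normalizedPlacement_sub hG hab hf hnt
  simp only [Set.image_eq_range] at hmoving
  obtain ⟨-, -, hequiv⟩ := hf
  refine exists_isNACColoring_of_norm_sub_eq
    (w := fun v (t : Set.Icc (0 : ℝ) 1) => normalizedPlacement a b (f t) v)
    (fun x y hxy => ?_) ⟨a, b, hab, ?_⟩ hmoving
  · refine ⟨dist (p x) (p y) / dist (p a) (p b), ?_, fun t => ?_⟩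
    · rw [hp hxy, hp hab]
      exact (div_pos (hpos _ hxy) (hpos _ hab)).ne'
    · rw [norm_normalizedPlacement_sub, (hequiv t t.2).2 hxy, (hequiv t t.2).2 hab]
  · exact funext fun t => normalizedPlacement_sub_eq_one ((hequiv t t.2).1 hab)

end Flex

/-- A connected graph with at least one edge which is movable has a NAC-coloring. -/
theorem NAC_coloring_of_movable [Fintype V] (G : SimpleGraph V)
    (hconn : G.Connected) (hne : G.edgeSet.Nonempty) (hmov : Movable G) :
    ∃ δ : Sym2 V → Bool, IsNACColoring G δ :=
  NAC_coloring_of_movable_general hconn.preconnected <| hmov.imp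
    fun _ ⟨hpos, p, hp, f, hf, hnt, _⟩ => ⟨hpos, p, hp, f, hf, hnt⟩
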